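/- Let d > 2 and let C be a positive semidefinite matrix on ℂ²⊗ℂ^d with eigenvalues λ1 ≥ … ≥ λ_{2d} satisfying λ3 = λ4 = … = λ_{2d−1} and λ2 ≥ 2(d−2)λ3 + λ_{2d}. Then at least one of the following majorizations holds: λ(tr_1[C]) ⊕ λ(tr_2[C]) ≺ λ(tr_1[Λ]) ⊕ λ(tr_2[Λ]), or λ(tr_1[C]) ⊕ λ(tr_2[C]) ≺ λ(tr_1[Λ']) ⊕ λ(tr_2[Λ']), where Λ is the diagonal matrix with diagonal (λ1, …, λ_{2d}) (decreasing order with respect to the lexicographic index ordering) and Λ' is obtained from Λ by swapping the diagonal entries at positions 2 and d+1. -/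

import Mathlib

open Matrix Finset Kronecker
open scoped ComplexOrder

/-- The first partial trace of a matrix on `ℂ^{d1} ⊗ ℂ^{d2}` (index pairs `(i,s)` ordered
lexicographically): `(tr_1 C)_{s,t} = ∑_i C_{(i,s),(i,t)}`. -/
noncomputable def ptrace1 {d1 d2 : ℕ} (C : Matrix (Fin d1 × Fin d2) (Fin d1 × Fin d2) ℂ) :
    Matrix (Fin d2) (Fin d2) ℂ :=
  Matrix.of fun s t => ∑ i : Fin d1, C (i, s) (i, t)

/-- The second partial trace: `(tr_2 C)_{i,j} = ∑_s C_{(i,s),(j,s)}`. -/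
noncomputable def ptrace2 {d1 d2 : ℕ} (C : Matrix (Fin d1 × Fin d2) (Fin d1 × Fin d2) ℂ) :
    Matrix (Fin d1) (Fin d1) ℂ :=
  Matrix.of fun i j => ∑ s : Fin d2, C (i, s) (j, s)

/-- The sum of the `k` largest entries of the vector `x` (the largest value of a sum of `k`
entries of `x`), i.e. `∑_{i=1}^k x_i^↓`. -/
noncomputable def maxSum {ι : Type*} [Fintype ι] (x : ι → ℝ) (k : ℕ) : ℝ :=
  sSup {s : ℝ | ∃ A : Finset ι, A.card = k ∧ s = ∑ i ∈ A, x i}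

/-- `x ≺ y` (majorization): for every `k`, the sum of the `k` largest entries of `x` is at
most the sum of the `k` largest entries of `y`, and the total sums are equal. -/
def Majorizes {ι κ : Type*} [Fintype ι] [Fintype κ] (x : ι → ℝ) (y : κ → ℝ) : Prop :=
  (∀ k : ℕ, maxSum x k ≤ maxSum y k) ∧ ∑ i, x i = ∑ j, y j

/-- `x ≺_w y` (weak majorization). -/
def WeakMajorizes {ι κ : Type*} [Fintype ι] [Fintype κ] (x : ι → ℝ) (y : κ → ℝ) : Prop :=
  ∀ k : ℕ, maxSum x k ≤ maxSum y k

/-!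
In a product of eigenbases of the two partial traces, the diagonal of `C` is a `2 × d` array whose
column and row sums are the eigenvalues of `tr₁ C` and `tr₂ C`, and by Schur's theorem this array is
majorized by the spectrum of `C`. The spectrum is the constant `λ₃` except at `λ₁`, `λ₂` and
`λ_{2d}`, so majorization gives simple bounds on the sums over columns and rows. If no column sum of
the array is too large, then these bounds suffice for `Λ`. Otherwise the bound on the sum of a large
column and a row forces all row sums to be small, and then they suffice for `Λ'`.
-/

section Majorization

variable {ι κ ν : Type*} [Fintype ι] [Fintype κ] [Fintype ν]

lemma sum_le_maxSum (x : ι → ℝ) (A : Finset ι) : ∑ i ∈ A, x i ≤ maxSum x #A := by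
  refine le_csSup (((Set.finite_range fun B : Finset ι => ∑ i ∈ B, x i).subset ?_).bddAbove)
    ⟨A, rfl, rfl⟩
  rintro _ ⟨B, -, rfl⟩
  exact ⟨B, rfl⟩

lemma maxSum_comp_equiv (x : ι → ℝ) (e : κ ≃ ι) (k : ℕ) : maxSum (x ∘ e) k = maxSum x k := by
  have exists_finset_iff (p : Finset ι → Prop) : (∃ A, p A) ↔ ∃ B : Finset κ, p (B.map e) :=
    e.finsetCongr.surjective.exists
  simp only [maxSum, exists_finset_iff, card_map, sum_map, Equiv.coe_toEmbedding,
    Function.comp_apply]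

lemma Majorizes.comp_equiv {x : ι → ℝ} {y : κ → ℝ} (h : Majorizes x y) (e : ν ≃ κ) :
    Majorizes x (y ∘ e) :=
  ⟨fun k => (h.1 k).trans_eq (maxSum_comp_equiv y e k).symm, h.2.trans (e.sum_comp y).symm⟩

lemma Majorizes.sum_le {x : ι → ℝ} {y : κ → ℝ} (h : Majorizes x y) {A : Finset ι} {u : ℝ}
    (hA : #A ≤ Fintype.card κ) (hu : ∀ B : Finset κ, #B = #A → ∑ j ∈ B, y j ≤ u) :
    ∑ i ∈ A, x i ≤ u := by
  obtain ⟨B, -, hB⟩ := exists_subset_card_eq (s := (univ : Finset κ)) hA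
  calc ∑ i ∈ A, x i ≤ maxSum x #A := sum_le_maxSum x A
    _ ≤ maxSum y #A := h.1 _
    _ ≤ u := csSup_le ⟨_, B, hB, rfl⟩ (by rintro _ ⟨B', hB', rfl⟩; exact hu B' hB')

lemma maxSum_eq_zero_of_card_lt (x : ι → ℝ) {k : ℕ} (hk : Fintype.card ι < k) :
    maxSum x k = 0 := by
  have hempty : {s : ℝ | ∃ A : Finset ι, #A = k ∧ s = ∑ i ∈ A, x i} = ∅ := by
    refine Set.eq_empty_of_forall_notMem ?_
    rintro _ ⟨A, rfl, -⟩
    exact (card_le_univ A).not_gt hk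
  rw [maxSum, hempty, Real.sSup_empty]

lemma majorizes_of_sum_le_maxSum {x : ι → ℝ} {y : κ → ℝ}
    (hcard : Fintype.card κ ≤ Fintype.card ι) (h : ∀ A : Finset ι, ∑ i ∈ A, x i ≤ maxSum y #A)
    (hsum : ∑ i, x i = ∑ j, y j) : Majorizes x y := by
  refine ⟨fun k => ?_, hsum⟩
  rcases le_or_gt k (Fintype.card ι) with hk | hk
  · obtain ⟨A, -, hA⟩ := exists_subset_card_eq (s := (univ : Finset ι)) hk
    refine csSup_le ⟨_, A, hA, rfl⟩ ?_
    rintro _ ⟨B, rfl, rfl⟩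
    exact h B
  · rw [maxSum_eq_zero_of_card_lt x hk, maxSum_eq_zero_of_card_lt y (hcard.trans_lt hk)]

lemma majorizes_mulVec_of_mem_doublyStochastic [DecidableEq ι] {D : Matrix ι ι ℝ}
    (hD : D ∈ doublyStochastic ℝ ι) (x : ι → ℝ) : Majorizes (D *ᵥ x) x := by
  refine majorizes_of_sum_le_maxSum le_rfl (fun A => ?_) (sum_mulVec_of_mem_doublyStochastic hD)
  -- By Birkhoff's theorem it suffices to bound a linear functional at the permutation matrices.
  let φ : Matrix ι ι ℝ →ₗ[ℝ] ℝ :=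
    ∑ i ∈ A, LinearMap.proj i ∘ₗ (mulVecBilin ℝ ℝ).flip x
  have hφ (M : Matrix ι ι ℝ) : φ M = ∑ i ∈ A, (M *ᵥ x) i := by simp [φ]
  have hperm : {M | ∃ σ : Equiv.Perm ι, σ.permMatrix ℝ = M} ⊆ {M | φ M ≤ maxSum x #A} := by
    rintro _ ⟨σ, rfl⟩
    simpa [hφ, permMatrix_mulVec] using sum_le_maxSum x (A.map σ.toEmbedding)
  rw [← hφ]
  rw [← SetLike.mem_coe, doublyStochastic_eq_convexHull_permMatrix] at hD
  exact convexHull_min hperm (convex_halfSpace_le φ.isLinear _) hD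

end Majorization

section Schur

variable {n 𝕜 : Type*} [Fintype n] [DecidableEq n] [RCLike 𝕜]

lemma normSq_mem_doublyStochastic_of_mem_unitaryGroup {U : Matrix n n 𝕜}
    (hU : U ∈ unitaryGroup n 𝕜) :
    (of fun i j => RCLike.normSq (U i j)) ∈ doublyStochastic ℝ n := by
  refine mem_doublyStochastic_iff_sum.2
    ⟨fun i j => RCLike.normSq_nonneg _, fun i => ?_, fun j => ?_⟩
  · have := congrFun₂ (mem_unitaryGroup_iff.1 hU) i i
    simp only [mul_apply, star_apply, RCLike.star_def, RCLike.mul_conj, one_apply_eq] at this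
    simp only [of_apply, RCLike.normSq_eq_def']
    exact_mod_cast this
  · have := congrFun₂ (mem_unitaryGroup_iff'.1 hU) j j
    simp only [mul_apply, star_apply, RCLike.star_def, RCLike.conj_mul, one_apply_eq] at this
    simp only [of_apply, RCLike.normSq_eq_def']
    exact_mod_cast this

lemma re_mul_diagonal_mul_star_apply (U : Matrix n n 𝕜) (v : n → ℝ) (i : n) :
    RCLike.re ((U * diagonal (RCLike.ofReal ∘ v) * star U : Matrix n n 𝕜) i i) =
      ((of fun i j => RCLike.normSq (U i j)) *ᵥ v) i := by
  simp only [mul_apply (M := U * _), mul_diagonal, star_apply, RCLike.star_def, mulVec, dotProduct,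
    of_apply, map_sum, Function.comp_apply]
  refine sum_congr rfl fun j _ => ?_
  rw [mul_right_comm, RCLike.mul_conj, RCLike.normSq_eq_def']
  norm_cast

theorem majorizes_diag_unitary_conj_eigenvalues {A : Matrix n n 𝕜} (hA : A.IsHermitian)
    {W : Matrix n n 𝕜} (hW : W ∈ unitaryGroup n 𝕜) :
    Majorizes (fun i => RCLike.re ((star W * A * W) i i)) hA.eigenvalues := by
  let E : Matrix n n 𝕜 := hA.eigenvectorUnitary
  have hE : star W * E ∈ unitaryGroup n 𝕜 :=
    mul_mem (Unitary.star_mem hW) (SetLike.coe_mem _)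
  have hconj : star W * A * W =
      (star W * E) * diagonal (RCLike.ofReal ∘ hA.eigenvalues) * star (star W * E) := by
    conv_lhs => rw [hA.spectral_theorem, Unitary.conjStarAlgAut_apply]
    simp only [E, star_mul, star_star, Matrix.mul_assoc]
  simp only [hconj, re_mul_diagonal_mul_star_apply]
  exact majorizes_mulVec_of_mem_doublyStochastic
    (normSq_mem_doublyStochastic_of_mem_unitaryGroup hE) hA.eigenvalues

lemma re_star_eigenvectorUnitary_mul_mul_apply {A : Matrix n n 𝕜} (hA : A.IsHermitian) (i : n) :
    RCLike.re ((star (hA.eigenvectorUnitary : Matrix n n 𝕜) * A * hA.eigenvectorUnitary) i i) =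
      hA.eigenvalues i := by
  have := hA.conjStarAlgAut_star_eigenvectorUnitary
  rw [Unitary.conjStarAlgAut_star_apply] at this
  simp [this]

end Schur

section PartialTrace

variable {d₁ d₂ : ℕ} (C : Matrix (Fin d₁ × Fin d₂) (Fin d₁ × Fin d₂) ℂ)

lemma ptrace1_mul_one_kronecker (U : Matrix (Fin d₂) (Fin d₂) ℂ) :
    ptrace1 (C * ((1 : Matrix (Fin d₁) (Fin d₁) ℂ) ⊗ₖ U)) = ptrace1 C * U := by
  ext s t
  simpa [ptrace1, mul_apply, Fintype.sum_prod_type, one_apply, sum_mul] using sum_comm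

lemma ptrace1_one_kronecker_mul (U : Matrix (Fin d₂) (Fin d₂) ℂ) :
    ptrace1 (((1 : Matrix (Fin d₁) (Fin d₁) ℂ) ⊗ₖ U) * C) = U * ptrace1 C := by
  ext s t
  simpa [ptrace1, mul_apply, Fintype.sum_prod_type, one_apply, mul_sum] using sum_comm

lemma ptrace1_kronecker_one_mul_comm (V : Matrix (Fin d₁) (Fin d₁) ℂ) :
    ptrace1 ((V ⊗ₖ (1 : Matrix (Fin d₂) (Fin d₂) ℂ)) * C) = ptrace1 (C * (V ⊗ₖ 1)) := by
  ext s t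
  simpa [ptrace1, mul_apply, Fintype.sum_prod_type, one_apply, mul_comm] using sum_comm

lemma ptrace2_eq_ptrace1_submatrix_swap :
    ptrace2 C = ptrace1 (C.submatrix Prod.swap Prod.swap) :=
  rfl

lemma ptrace1_star_kronecker_mul_mul {V : Matrix (Fin d₁) (Fin d₁) ℂ}
    (hV : V ∈ unitaryGroup (Fin d₁) ℂ) (U : Matrix (Fin d₂) (Fin d₂) ℂ) :
    ptrace1 (star (V ⊗ₖ U) * C * (V ⊗ₖ U)) = star U * ptrace1 C * U := by
  have hVU : V ⊗ₖ U = (V ⊗ₖ 1) * (1 ⊗ₖ U) := by rw [← mul_kronecker_mul, mul_one, one_mul]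
  have hstar : star (V ⊗ₖ U) = (1 ⊗ₖ star U) * (star V ⊗ₖ 1) := by
    rw [← mul_kronecker_mul, mul_one, one_mul]
    exact conjTranspose_kronecker V U
  calc ptrace1 (star (V ⊗ₖ U) * C * (V ⊗ₖ U))
      = ptrace1 ((1 ⊗ₖ star U) * ((star V ⊗ₖ 1) * (C * (V ⊗ₖ 1))) * (1 ⊗ₖ U)) := by
        rw [hstar, hVU]; simp only [Matrix.mul_assoc]
    _ = star U * ptrace1 (C * ((V ⊗ₖ 1) * (star V ⊗ₖ 1))) * U := by
        rw [ptrace1_mul_one_kronecker, ptrace1_one_kronecker_mul, ptrace1_kronecker_one_mul_comm,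
          Matrix.mul_assoc C]
    _ = star U * ptrace1 C * U := by
        rw [← mul_kronecker_mul, mem_unitaryGroup_iff.1 hV, mul_one, one_kronecker_one,
          Matrix.mul_one]

lemma ptrace2_star_kronecker_mul_mul (V : Matrix (Fin d₁) (Fin d₁) ℂ)
    {U : Matrix (Fin d₂) (Fin d₂) ℂ} (hU : U ∈ unitaryGroup (Fin d₂) ℂ) :
    ptrace2 (star (V ⊗ₖ U) * C * (V ⊗ₖ U)) = star V * ptrace2 C * V := by
  have hswap : (V ⊗ₖ U).submatrix Prod.swap Prod.swap = U ⊗ₖ V := by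
    ext x y
    exact mul_comm _ _
  rw [ptrace2_eq_ptrace1_submatrix_swap, ptrace2_eq_ptrace1_submatrix_swap,
    ← ptrace1_star_kronecker_mul_mul _ hU, ← hswap,
    ← submatrix_mul_equiv _ _ _ (Equiv.prodComm _ _),
    ← submatrix_mul_equiv _ _ _ (Equiv.prodComm _ _)]
  rfl

end PartialTrace

section Marginals

variable {ι κ : Type*} [Fintype ι] [Fintype κ]

/-- The column sums of the array `c`, followed by its row sums. For the diagonal matrix `C` with
entries `c` this is the concatenation `λ(tr₁ C) ⊕ λ(tr₂ C)`. -/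
def marginals (c : ι × κ → ℝ) : κ ⊕ ι → ℝ :=
  Sum.elim (fun s => ∑ i, c (i, s)) fun i => ∑ s, c (i, s)

lemma sum_disjSum_marginals (c : ι × κ → ℝ) (L : Finset κ) (R : Finset ι) :
    ∑ j ∈ L.disjSum R, marginals c j = ∑ x ∈ univ ×ˢ L, c x + ∑ x ∈ R ×ˢ univ, c x := by
  rw [sum_disjSum, sum_product_right, sum_product]
  rfl

lemma sum_marginals (c : ι × κ → ℝ) : ∑ j, marginals c j = 2 * ∑ x, c x := by
  rw [← univ_disjSum_univ, sum_disjSum_marginals, univ_product_univ, two_mul]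

lemma le_maxSum_marginals {f : ι × κ → ℝ} {a : ℝ} {k : ℕ} (L : Finset κ) (R : Finset ι)
    (hcard : #L + #R = k) (ha : a ≤ ∑ x ∈ univ ×ˢ L, f x + ∑ x ∈ R ×ˢ univ, f x) :
    a ≤ maxSum (marginals f) k := by
  rw [← hcard, ← card_disjSum]
  rw [← sum_disjSum_marginals] at ha
  exact ha.trans (sum_le_maxSum _ _)

lemma majorizes_marginals {c f : ι × κ → ℝ} (hsum : ∑ x, c x = ∑ x, f x)
    (h : ∀ (L : Finset κ) (R : Finset ι),
      ∑ x ∈ univ ×ˢ L, c x + ∑ x ∈ R ×ˢ univ, c x ≤ maxSum (marginals f) (#L + #R)) :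
    Majorizes (marginals c) (marginals f) := by
  refine majorizes_of_sum_le_maxSum le_rfl (fun A => ?_) ?_
  · rw [← A.toLeft_disjSum_toRight, sum_disjSum_marginals, card_disjSum]
    exact h _ _
  · rw [sum_marginals, sum_marginals, hsum]

end Marginals

section Spiked

variable {ι : Type*} [DecidableEq ι]

/-- For distinct `x`, `y`, `z`, the vector equal to `m + p` at `x`, `m + q` at `y`, `m - r` at `z`
and `m` elsewhere. It encodes the eigenvalues `λ₁ = m + p`, `λ₂ = m + q`, `λ₃ = ⋯ = λ_{N-1} = m`,
`λ_N = m - r`. -/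
def spiked (x y z : ι) (m p q r : ℝ) (k : ι) : ℝ :=
  m + (Pi.single x p : ι → ℝ) k + (Pi.single y q : ι → ℝ) k - (Pi.single z r : ι → ℝ) k

lemma sum_spiked (x y z : ι) (m p q r : ℝ) (A : Finset ι) :
    ∑ k ∈ A, spiked x y z m p q r k =
      #A * m + (if x ∈ A then p else 0) + (if y ∈ A then q else 0) - if z ∈ A then r else 0 := by
  simp [spiked, sum_add_distrib]

variable [Fintype ι]

/-- The inequalities satisfied by a vector majorized by `spiked x y z m p q r`, for `0 ≤ q ≤ p` and
`0 ≤ r`; they do not mention the positions of the spikes. -/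
structure SpikeBounds (c : ι → ℝ) (m p q r : ℝ) : Prop where
  apply_le : ∀ x, c x ≤ m + p
  sum_le : ∀ S : Finset ι, ∑ x ∈ S, c x ≤ #S * m + p + q
  sum_univ : ∑ x, c x = Fintype.card ι * m + p + q - r

lemma Majorizes.spikeBounds {c : ι → ℝ} {x y z : ι} {m p q r : ℝ} (hxy : x ≠ y) (hq : 0 ≤ q)
    (hqp : q ≤ p) (hr : 0 ≤ r) (hc : Majorizes c (spiked x y z m p q r)) :
    SpikeBounds c m p q r where
  apply_le k := by
    rw [← sum_singleton c k]
    refine hc.sum_le (card_le_univ _) fun B hB => ?_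
    obtain ⟨j, rfl⟩ := card_eq_one.1 (hB.trans (card_singleton k))
    rw [sum_spiked]
    by_cases hjx : x = j <;> by_cases hjy : y = j <;> by_cases hjz : z = j <;> simp_all <;> linarith
  sum_le S := by
    refine hc.sum_le (card_le_univ _) fun B hB => ?_
    rw [sum_spiked, hB]
    split_ifs <;> linarith
  sum_univ := by
    rw [hc.2, sum_spiked]
    simp

end Spiked

section SpikedArray

lemma finset_fin_two_cases (R : Finset (Fin 2)) : R = ∅ ∨ (∃ i, R = {i}) ∨ R = univ := by
  decide +revert

variable {ι κ : Type*} {m p q r : ℝ}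

lemma sum_columns_spiked [Fintype ι] [DecidableEq ι] [DecidableEq κ] {x y z : ι × κ}
    {L : Finset κ} (hx : x.2 ∈ L) (hy : y.2 ∈ L) (hz : z.2 ∉ L) :
    ∑ k ∈ univ ×ˢ L, spiked x y z m p q r k = Fintype.card ι * #L * m + p + q := by
  simp [sum_spiked, hx, hy, hz]

variable [Fintype κ]

lemma exists_superset_notMem_card_eq {u : Finset κ} {t : κ} (ht : t ∉ u) {l : ℕ} (hul : #u ≤ l)
    (hl : l < Fintype.card κ) : ∃ L, u ⊆ L ∧ t ∉ L ∧ #L = l := by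
  classical
  have hl' : l ≤ #(univ.erase t) := by
    rw [card_erase_of_mem (mem_univ t), card_univ]
    lia
  obtain ⟨L, huL, hLt, hL⟩ :=
    exists_subsuperset_card_eq (subset_erase.2 ⟨subset_univ u, ht⟩) hul hl'
  exact ⟨L, huL, fun h => notMem_erase t univ (hLt h), hL⟩

lemma SpikeBounds.sum_row_le [Fintype ι] {c : ι × κ → ℝ} (hc : SpikeBounds c m p q r) (i : ι) :
    ∑ x ∈ {i} ×ˢ univ, c x ≤ Fintype.card κ * m + p + q := by
  simpa only [card_product, card_singleton, one_mul, card_univ] using hc.sum_le ({i} ×ˢ univ)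

lemma SpikeBounds.sum_columns_le [Fintype ι] {c : ι × κ → ℝ} (hc : SpikeBounds c m p q r)
    (L : Finset κ) : ∑ x ∈ univ ×ˢ L, c x ≤ Fintype.card ι * #L * m + p + q := by
  simpa only [card_product, card_univ, Nat.cast_mul] using hc.sum_le (univ ×ˢ L)

lemma SpikeBounds.sum_column_add_sum_row_le {c : Fin 2 × κ → ℝ} (hc : SpikeBounds c m p q r)
    (s : κ) (i : Fin 2) :
    ∑ x ∈ univ ×ˢ {s}, c x + ∑ x ∈ {i} ×ˢ univ, c x ≤
      (Fintype.card κ + 2) * m + 2 * p + q := by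
  classical
  have hnotMem : (i.rev, s) ∉ ({i} : Finset (Fin 2)) ×ˢ (univ : Finset κ) := by
    fin_cases i <;> simp
  have hcolumn : ∑ x ∈ univ ×ˢ {s}, c x = c (i, s) + c (i.rev, s) := by
    rw [sum_product_right, sum_singleton, Fin.sum_univ_two]
    fin_cases i
    · rfl
    · exact add_comm _ _
  have hunion := hc.sum_le (insert (i.rev, s) ({i} ×ˢ univ))
  rw [sum_insert hnotMem, card_insert_of_notMem hnotMem, card_product, card_singleton, one_mul,
    card_univ] at hunion
  push_cast at hunion
  linarith [hc.apply_le (i, s)]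

variable [Fintype ι] [DecidableEq ι] [DecidableEq κ] {x y z : ι × κ}

lemma SpikeBounds.exists_sum_columns_le {c : ι × κ → ℝ} (hc : SpikeBounds c m p q r)
    {u : Finset κ} (hx : x.2 ∈ u) (hy : y.2 ∈ u) (hz : z.2 ∉ u) {L : Finset κ} (hL : #u ≤ #L) :
    ∃ L' : Finset κ, #L' = #L ∧
      ∑ k ∈ univ ×ˢ L, c k ≤ ∑ k ∈ univ ×ˢ L', spiked x y z m p q r k := by
  obtain rfl | hlt := eq_or_ne L univ
  · exact ⟨univ, rfl, by simp [hc.sum_univ, sum_spiked]⟩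
  obtain ⟨L', huL, hzL, hcard⟩ :=
    exists_superset_notMem_card_eq hz hL ((card_lt_iff_ne_univ L).2 hlt)
  refine ⟨L', hcard, ?_⟩
  rw [sum_columns_spiked (huL hx) (huL hy) hzL, hcard]
  exact hc.sum_columns_le L

end SpikedArray

section RowSpiked

variable {κ : Type*} [DecidableEq κ] {m p q r : ℝ} {c : Fin 2 × κ → ℝ} {s₀ s₁ t : κ}

/-- The array `Λ` of the theorem: the two largest entries share the row `0`. -/
abbrev rowSpiked (s₀ s₁ t : κ) (m p q r : ℝ) : Fin 2 × κ → ℝ :=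
  spiked (0, s₀) (0, s₁) (1, t) m p q r

lemma sum_column_rowSpiked (h₀₁ : s₀ ≠ s₁) (h₀ : s₀ ≠ t) :
    ∑ x ∈ univ ×ˢ {s₀}, rowSpiked s₀ s₁ t m p q r x = 2 * m + p := by
  rw [sum_spiked]
  simp [h₀₁, h₀]

variable [Fintype κ]

lemma sum_row_rowSpiked :
    ∑ x ∈ {0} ×ˢ univ, rowSpiked s₀ s₁ t m p q r x =
      Fintype.card κ * m + p + q := by
  rw [sum_spiked]
  simp

lemma SpikeBounds.sum_columns_le_maxSum_rowSpiked (hκm : 0 ≤ ((Fintype.card κ : ℝ) - 2) * m)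
    (hp : 0 ≤ p) (hq : 0 ≤ q) (hc : SpikeBounds c m p q r) (L : Finset κ) :
    ∑ x ∈ univ ×ˢ L, c x ≤
      maxSum (marginals (rowSpiked s₀ s₁ t m p q r)) #L := by
  obtain rfl | hL := L.eq_empty_or_nonempty
  · exact le_maxSum_marginals ∅ ∅ rfl (by simp)
  have hL_pos := hL.card_pos
  obtain ⟨L', -, htL', hcard⟩ := exists_superset_notMem_card_eq (notMem_empty t)
    (Nat.zero_le (#L - 1)) (by have := card_le_univ L; lia)
  refine le_maxSum_marginals L' {0} (by simp; lia) ?_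
  have hcard' : (#L : ℝ) = #L' + 1 := by
    exact_mod_cast (by lia : #L = #L' + 1)
  have hcolumns : 2 * #L' * m ≤
      ∑ x ∈ univ ×ˢ L', rowSpiked s₀ s₁ t m p q r x := by
    rw [sum_spiked]
    simp only [card_product, card_univ, Fintype.card_fin, mem_product, mem_univ, htL', true_and]
    push_cast
    split_ifs <;> linarith
  calc ∑ x ∈ univ ×ˢ L, c x ≤ 2 * #L * m + p + q := mod_cast hc.sum_columns_le L
    _ ≤ 2 * #L' * m + (Fintype.card κ * m + p + q) := by rw [hcard']; linarith
    _ ≤ _ := by rw [sum_row_rowSpiked]; linarith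

lemma SpikeBounds.sum_columns_add_sum_row_le_maxSum_rowSpiked
    (h₀₁ : s₀ ≠ s₁) (h₀ : s₀ ≠ t) (h₁ : s₁ ≠ t) (hc : SpikeBounds c m p q r)
    (L : Finset κ) (i : Fin 2) :
    ∑ x ∈ univ ×ˢ L, c x + ∑ x ∈ {i} ×ˢ univ, c x ≤
      maxSum (marginals (rowSpiked s₀ s₁ t m p q r)) (#L + 1) := by
  obtain hL₀ | hL₁ | hL₂ : #L = 0 ∨ #L = 1 ∨ 2 ≤ #L := by lia
  · obtain rfl := card_eq_zero.1 hL₀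
    refine le_maxSum_marginals ∅ {0} rfl ?_
    rw [sum_row_rowSpiked, product_empty, sum_empty, sum_empty]
    linarith [hc.sum_row_le i]
  · obtain ⟨s, rfl⟩ := card_eq_one.1 hL₁
    refine le_maxSum_marginals {s₀} {0} rfl ?_
    rw [sum_row_rowSpiked, sum_column_rowSpiked h₀₁ h₀]
    linarith [hc.sum_column_add_sum_row_le s i]
  · obtain ⟨L', hcard, hL'⟩ := hc.exists_sum_columns_le (x := ((0 : Fin 2), s₀))
      (y := (0, s₁)) (z := (1, t)) (u := {s₀, s₁}) (by simp) (by simp)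
      (by simp [h₀.symm, h₁.symm]) ((card_pair h₀₁).trans_le hL₂)
    refine le_maxSum_marginals L' {0} (by simp [hcard]) (add_le_add hL' ?_)
    rw [sum_row_rowSpiked]
    exact hc.sum_row_le i

lemma SpikeBounds.sum_columns_add_sum_univ_le_maxSum_rowSpiked
    (hgap : ((Fintype.card κ : ℝ) - 2) * m ≤ p + r) (h₀₁ : s₀ ≠ s₁) (h₀ : s₀ ≠ t) (h₁ : s₁ ≠ t)
    (hc : SpikeBounds c m p q r)
    (hcolumn : ∀ s, ∑ x ∈ univ ×ˢ {s}, c x ≤ p + q + r - ((Fintype.card κ : ℝ) - 4) * m)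
    (L : Finset κ) :
    ∑ x ∈ univ ×ˢ L, c x + ∑ x, c x ≤
      maxSum (marginals (rowSpiked s₀ s₁ t m p q r)) (#L + 2) := by
  have ht : t ∉ ({s₀, s₁} : Finset κ) := by simp [h₀.symm, h₁.symm]
  have htotal : ∑ x, c x = 2 * Fintype.card κ * m + p + q - r := by simp [hc.sum_univ]
  obtain hL₀ | hL₁ | hL₂ : #L = 0 ∨ #L = 1 ∨ 2 ≤ #L := by lia
  · obtain rfl := card_eq_zero.1 hL₀
    refine le_maxSum_marginals {s₀} {0} rfl ?_
    rw [sum_row_rowSpiked, sum_column_rowSpiked h₀₁ h₀, product_empty, sum_empty, htotal]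
    linarith
  · obtain ⟨s, rfl⟩ := card_eq_one.1 hL₁
    refine le_maxSum_marginals {s₀, s₁} {0} (by simp [card_pair h₀₁]) ?_
    rw [sum_row_rowSpiked, sum_columns_spiked (by simp) (by simp) ht, card_pair h₀₁, htotal,
      Fintype.card_fin]
    push_cast
    linarith [hcolumn s]
  · obtain ⟨L', hcard, hL'⟩ := hc.exists_sum_columns_le (x := ((0 : Fin 2), s₀))
      (y := (0, s₁)) (z := (1, t)) (u := {s₀, s₁}) (by simp) (by simp) ht
      ((card_pair h₀₁).trans_le hL₂)
    refine le_maxSum_marginals L' univ (by simp [hcard]) (add_le_add hL' ?_)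
    simp [hc.sum_univ, sum_spiked]

theorem SpikeBounds.marginals_majorizes_rowSpiked (hκm : 0 ≤ ((Fintype.card κ : ℝ) - 2) * m)
    (hp : 0 ≤ p) (hq : 0 ≤ q) (hgap : ((Fintype.card κ : ℝ) - 2) * m ≤ p + r)
    (h₀₁ : s₀ ≠ s₁) (h₀ : s₀ ≠ t) (h₁ : s₁ ≠ t) (hc : SpikeBounds c m p q r)
    (hcolumn : ∀ s, ∑ x ∈ univ ×ˢ {s}, c x ≤ p + q + r - ((Fintype.card κ : ℝ) - 4) * m) :
    Majorizes (marginals c) (marginals (rowSpiked s₀ s₁ t m p q r)) := by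
  refine majorizes_marginals (by simp [hc.sum_univ, sum_spiked]) fun L R => ?_
  obtain rfl | ⟨i, rfl⟩ | rfl := finset_fin_two_cases R
  · simpa only [empty_product, sum_empty, card_empty, add_zero] using
      hc.sum_columns_le_maxSum_rowSpiked hκm hp hq L
  · exact hc.sum_columns_add_sum_row_le_maxSum_rowSpiked h₀₁ h₀ h₁ L i
  · exact hc.sum_columns_add_sum_univ_le_maxSum_rowSpiked hgap h₀₁ h₀ h₁ hcolumn L

end RowSpiked

section ColSpiked

variable {κ : Type*} [Fintype κ] [DecidableEq κ] {m p q r : ℝ} {c : Fin 2 × κ → ℝ} {s₀ t : κ}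

/-- The array `Λ'` of the theorem: the two largest entries share the column `s₀`. -/
abbrev colSpiked (s₀ t : κ) (m p q r : ℝ) : Fin 2 × κ → ℝ :=
  spiked (0, s₀) (1, s₀) (1, t) m p q r

lemma sum_row_colSpiked :
    ∑ x ∈ {0} ×ˢ univ, colSpiked s₀ t m p q r x =
      Fintype.card κ * m + p := by
  rw [sum_spiked]
  simp

lemma SpikeBounds.exists_sum_columns_le_colSpiked (h₀ : s₀ ≠ t) (hc : SpikeBounds c m p q r)
    {L : Finset κ} (hL : L.Nonempty) :
    ∃ L' : Finset κ, #L' = #L ∧ ∑ x ∈ univ ×ˢ L, c x ≤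
      ∑ x ∈ univ ×ˢ L', colSpiked s₀ t m p q r x :=
  hc.exists_sum_columns_le (u := {s₀}) (by simp) (by simp) (by simpa using h₀.symm)
    (by simpa using hL.card_pos)

lemma SpikeBounds.sum_columns_le_maxSum_colSpiked (h₀ : s₀ ≠ t) (hc : SpikeBounds c m p q r)
    (L : Finset κ) :
    ∑ x ∈ univ ×ˢ L, c x ≤
      maxSum (marginals (colSpiked s₀ t m p q r)) #L := by
  obtain rfl | hL := L.eq_empty_or_nonempty
  · exact le_maxSum_marginals ∅ ∅ rfl (by simp)
  obtain ⟨L', hcard, hL'⟩ := hc.exists_sum_columns_le_colSpiked h₀ hL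
  exact le_maxSum_marginals L' ∅ (by simpa using hcard) (by simpa using hL')

lemma SpikeBounds.sum_columns_add_sum_row_le_maxSum_colSpiked (h₀ : s₀ ≠ t)
    (hr : r ≤ 2 * ((Fintype.card κ : ℝ) - 2) * m) (hc : SpikeBounds c m p q r)
    (hrow : ∀ i, ∑ x ∈ {i} ×ˢ univ, c x ≤ 2 * m + p + q) (L : Finset κ) (i : Fin 2) :
    ∑ x ∈ univ ×ˢ L, c x + ∑ x ∈ {i} ×ˢ univ, c x ≤
      maxSum (marginals (colSpiked s₀ t m p q r)) (#L + 1) := by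
  have ht : t ∉ ({s₀} : Finset κ) := by simpa using h₀.symm
  obtain hL₀ | hL₁ | hL₂ : #L = 0 ∨ #L = 1 ∨ 2 ≤ #L := by lia
  · obtain rfl := card_eq_zero.1 hL₀
    refine le_maxSum_marginals {s₀} ∅ rfl ?_
    rw [sum_columns_spiked (by simp) (by simp) ht]
    simpa using hrow i
  · obtain ⟨s, rfl⟩ := card_eq_one.1 hL₁
    refine le_maxSum_marginals {s₀} {0} rfl ?_
    rw [sum_row_colSpiked, sum_columns_spiked (by simp) (by simp) ht, card_singleton,
      Fintype.card_fin]
    push_cast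
    linarith [hc.sum_column_add_sum_row_le s i]
  · obtain ⟨L', hsL', htL', hcard⟩ := exists_superset_notMem_card_eq ht
      (by simp; lia : #{s₀} ≤ #L - 1) (by have := card_le_univ L; lia)
    refine le_maxSum_marginals L' univ (by simp; lia) ?_
    have hcard' : (#L : ℝ) = #L' + 1 := by
      exact_mod_cast (by lia : #L = #L' + 1)
    rw [singleton_subset_iff] at hsL'
    have hcolumns := hc.sum_columns_le L
    rw [hcard', Fintype.card_fin] at hcolumns
    push_cast at hcolumns
    rw [sum_columns_spiked hsL' hsL' htL', univ_product_univ, sum_spiked]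
    simp only [mem_univ, if_true, card_univ, Fintype.card_prod, Fintype.card_fin]
    push_cast
    linarith [hrow i]

lemma SpikeBounds.sum_columns_add_sum_univ_le_maxSum_colSpiked
    (hgap : ((Fintype.card κ : ℝ) - 2) * m ≤ p + r) (h₀ : s₀ ≠ t)
    (hc : SpikeBounds c m p q r) (L : Finset κ) :
    ∑ x ∈ univ ×ˢ L, c x + ∑ x, c x ≤
      maxSum (marginals (colSpiked s₀ t m p q r)) (#L + 2) := by
  have ht : t ∉ ({s₀} : Finset κ) := by simpa using h₀.symm
  obtain rfl | hL := L.eq_empty_or_nonempty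
  · refine le_maxSum_marginals {s₀} {0} rfl ?_
    rw [sum_row_colSpiked, sum_columns_spiked (by simp) (by simp) ht, product_empty, sum_empty,
      hc.sum_univ, card_singleton, Fintype.card_prod, Fintype.card_fin]
    push_cast
    linarith
  obtain ⟨L', hcard, hL'⟩ := hc.exists_sum_columns_le_colSpiked h₀ hL
  refine le_maxSum_marginals L' univ (by simp [hcard]) (add_le_add hL' ?_)
  simp [hc.sum_univ, sum_spiked]

theorem SpikeBounds.marginals_majorizes_colSpiked
    (hgap : ((Fintype.card κ : ℝ) - 2) * m ≤ p + r) (h₀ : s₀ ≠ t)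
    (hr : r ≤ 2 * ((Fintype.card κ : ℝ) - 2) * m) (hc : SpikeBounds c m p q r)
    (hrow : ∀ i, ∑ x ∈ {i} ×ˢ univ, c x ≤ 2 * m + p + q) :
    Majorizes (marginals c) (marginals (colSpiked s₀ t m p q r)) := by
  refine majorizes_marginals (by simp [hc.sum_univ, sum_spiked]) fun L R => ?_
  obtain rfl | ⟨i, rfl⟩ | rfl := finset_fin_two_cases R
  · simpa only [empty_product, sum_empty, card_empty, add_zero] using
      hc.sum_columns_le_maxSum_colSpiked h₀ L
  · exact hc.sum_columns_add_sum_row_le_maxSum_colSpiked h₀ hr hrow L i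
  · exact hc.sum_columns_add_sum_univ_le_maxSum_colSpiked hgap h₀ L

end ColSpiked

theorem marginals_majorizes_rowSpiked_or_colSpiked {κ : Type*} [Fintype κ] [DecidableEq κ]
    {m p q r : ℝ} (hm : 0 ≤ m) (hq : 0 ≤ q) (hqp : q ≤ p) (hr : 0 ≤ r)
    (hgap : 2 * ((Fintype.card κ : ℝ) - 2) * m ≤ q + r) {s₀ s₁ t : κ} (h₀₁ : s₀ ≠ s₁) (h₀ : s₀ ≠ t)
    (h₁ : s₁ ≠ t) {c : Fin 2 × κ → ℝ}
    (hc : Majorizes c (rowSpiked s₀ s₁ t m p q r)) :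
    Majorizes (marginals c) (marginals (rowSpiked s₀ s₁ t m p q r)) ∨
      Majorizes (marginals c) (marginals (colSpiked s₀ t m p q r)) := by
  have hκ : (2 : ℝ) ≤ Fintype.card κ := by
    exact_mod_cast (card_pair h₀).symm.trans_le (card_le_univ {s₀, t})
  have hκm : 0 ≤ ((Fintype.card κ : ℝ) - 2) * m := mul_nonneg (by linarith) hm
  have hgap' : ((Fintype.card κ : ℝ) - 2) * m ≤ p + r := by linarith
  have hbounds : SpikeBounds c m p q r := hc.spikeBounds (by simpa using h₀₁) hq hqp hr
  -- The threshold is the slack left by `Λ` when both rows and one column are selected.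
  by_cases hcolumn : ∀ s, ∑ x ∈ univ ×ˢ {s}, c x ≤ p + q + r - ((Fintype.card κ : ℝ) - 4) * m
  · exact .inl (hbounds.marginals_majorizes_rowSpiked hκm (hq.trans hqp) hq hgap' h₀₁ h₀ h₁ hcolumn)
  · push Not at hcolumn
    obtain ⟨s, hs⟩ := hcolumn
    refine .inr (hbounds.marginals_majorizes_colSpiked hgap' h₀ ?_ fun i => ?_)
    · have := hbounds.sum_columns_le {s}
      rw [card_singleton, Fintype.card_fin] at this
      push_cast at this
      linarith
    · linarith [hbounds.sum_column_add_sum_row_le s i]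

theorem exists_unitary_marginals_eq_sumElim_eigenvalues {d₁ d₂ : ℕ}
    {C : Matrix (Fin d₁ × Fin d₂) (Fin d₁ × Fin d₂) ℂ} (h₁ : (ptrace1 C).IsHermitian)
    (h₂ : (ptrace2 C).IsHermitian) :
    ∃ W ∈ unitaryGroup (Fin d₁ × Fin d₂) ℂ,
      marginals (fun x => ((star W * C * W) x x).re) = Sum.elim h₁.eigenvalues h₂.eigenvalues := by
  have hV := h₂.eigenvectorUnitary.2
  have hU := h₁.eigenvectorUnitary.2
  refine ⟨_, kronecker_mem_unitary hV hU, ?_⟩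
  ext (s | i)
  · rw [Sum.elim_inl, ← re_star_eigenvectorUnitary_mul_mul_apply,
      ← ptrace1_star_kronecker_mul_mul _ hV]
    simp [marginals, ptrace1]
  · rw [Sum.elim_inr, ← re_star_eigenvectorUnitary_mul_mul_apply,
      ← ptrace2_star_kronecker_mul_mul _ _ hU]
    simp [marginals, ptrace2]

theorem exists_majorizes_eigenvalues_marginals_eq {d₁ d₂ : ℕ}
    {C : Matrix (Fin d₁ × Fin d₂) (Fin d₁ × Fin d₂) ℂ} (hC : C.IsHermitian)
    (h₁ : (ptrace1 C).IsHermitian) (h₂ : (ptrace2 C).IsHermitian) :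
    ∃ c : Fin d₁ × Fin d₂ → ℝ,
      Majorizes c hC.eigenvalues ∧ marginals c = Sum.elim h₁.eigenvalues h₂.eigenvalues := by
  obtain ⟨W, hW, hmarginals⟩ := exists_unitary_marginals_eq_sumElim_eigenvalues h₁ h₂
  exact ⟨_, majorizes_diag_unitary_conj_eigenvalues hC hW, hmarginals⟩

lemma comp_equiv_eq_spiked {n : ℕ} (hn : 3 < n) {μ : Fin n → ℝ}
    (hmid : ∀ i : Fin n, 2 ≤ (i : ℕ) → (i : ℕ) ≤ n - 2 → μ i = μ ⟨2, by lia⟩)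
    {ι : Type*} [DecidableEq ι] (e : ι ≃ Fin n) {x y z : ι} (hx : e x = ⟨0, by lia⟩)
    (hy : e y = ⟨1, by lia⟩) (hz : e z = ⟨n - 1, by lia⟩) :
    μ ∘ e = spiked x y z (μ ⟨2, by lia⟩) (μ ⟨0, by lia⟩ - μ ⟨2, by lia⟩)
      (μ ⟨1, by lia⟩ - μ ⟨2, by lia⟩) (μ ⟨2, by lia⟩ - μ ⟨n - 1, by lia⟩) := by
  have hxy : x ≠ y := fun h => by simp_all
  have hxz : x ≠ z := fun h => by simp_all; lia
  have hyz : y ≠ z := fun h => by simp_all; lia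
  ext k
  by_cases hkx : k = x
  · simp [spiked, hkx, hx, hxy, hxz]
  by_cases hky : k = y
  · simp [spiked, hky, hy, hxy.symm, hyz]
  by_cases hkz : k = z
  · simp [spiked, hkz, hz, hxz.symm, hyz.symm]
  have h0 : (e k : ℕ) ≠ 0 := fun h => hkx (e.injective (by rw [hx]; exact Fin.ext h))
  have h1 : (e k : ℕ) ≠ 1 := fun h => hky (e.injective (by rw [hy]; exact Fin.ext h))
  have hlast : (e k : ℕ) ≠ n - 1 := fun h => hkz (e.injective (by rw [hz]; exact Fin.ext h))
  simp [spiked, hkx, hky, hkz, hmid (e k) (by lia) (by lia)]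

lemma comp_finProdFinEquiv_eq_rowSpiked {d : ℕ} (hd : 2 < d) {μ : Fin (2 * d) → ℝ}
    (hmid : ∀ i : Fin (2 * d), 2 ≤ (i : ℕ) → (i : ℕ) ≤ 2 * d - 2 → μ i = μ ⟨2, by lia⟩) :
    μ ∘ finProdFinEquiv = rowSpiked ⟨0, by lia⟩ ⟨1, by lia⟩ ⟨d - 1, by lia⟩ (μ ⟨2, by lia⟩)
      (μ ⟨0, by lia⟩ - μ ⟨2, by lia⟩) (μ ⟨1, by lia⟩ - μ ⟨2, by lia⟩)
      (μ ⟨2, by lia⟩ - μ ⟨2 * d - 1, by lia⟩) :=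
  comp_equiv_eq_spiked (by lia) hmid finProdFinEquiv (Fin.ext (by simp)) (Fin.ext (by simp))
    (Fin.ext (by simp; lia))

lemma comp_swap_finProdFinEquiv_eq_colSpiked {d : ℕ} (hd : 2 < d) {μ : Fin (2 * d) → ℝ}
    (hmid : ∀ i : Fin (2 * d), 2 ≤ (i : ℕ) → (i : ℕ) ≤ 2 * d - 2 → μ i = μ ⟨2, by lia⟩) :
    μ ∘ finProdFinEquiv.trans (Equiv.swap ⟨1, by lia⟩ ⟨d, by lia⟩) =
      colSpiked ⟨0, by lia⟩ ⟨d - 1, by lia⟩ (μ ⟨2, by lia⟩)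
        (μ ⟨0, by lia⟩ - μ ⟨2, by lia⟩) (μ ⟨1, by lia⟩ - μ ⟨2, by lia⟩)
        (μ ⟨2, by lia⟩ - μ ⟨2 * d - 1, by lia⟩) := by
  have hfirst : finProdFinEquiv ((0 : Fin 2), (⟨0, by lia⟩ : Fin d)) = ⟨0, by lia⟩ :=
    Fin.ext (by simp)
  have hswapped : finProdFinEquiv ((1 : Fin 2), (⟨0, by lia⟩ : Fin d)) = ⟨d, by lia⟩ :=
    Fin.ext (by simp)
  have hlast : finProdFinEquiv ((1 : Fin 2), (⟨d - 1, by lia⟩ : Fin d)) = ⟨2 * d - 1, by lia⟩ :=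
    Fin.ext (by simp; lia)
  refine comp_equiv_eq_spiked (by lia) hmid _ ?_ ?_ ?_
  · rw [Equiv.trans_apply, hfirst, Equiv.swap_apply_of_ne_of_ne] <;>
      simp only [ne_eq, Fin.mk.injEq] <;> lia
  · rw [Equiv.trans_apply, hswapped, Equiv.swap_apply_right]
  · rw [Equiv.trans_apply, hlast, Equiv.swap_apply_of_ne_of_ne] <;>
      simp only [ne_eq, Fin.mk.injEq] <;> lia

theorem sufficient_lambda2_qubit_qudit_general (d : ℕ) (hd : 2 < d)
    (C : Matrix (Fin 2 × Fin d) (Fin 2 × Fin d) ℂ) (hC : C.IsHermitian)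
    (htr1 : (ptrace1 C).IsHermitian) (htr2 : (ptrace2 C).IsHermitian)
    (μ : Fin (2 * d) → ℝ) (hμ : Antitone μ)
    (g : Fin (2 * d) ≃ Fin 2 × Fin d) (hg : ∀ k, μ k = hC.eigenvalues (g k))
    (hnonneg : 0 ≤ μ ⟨2, by lia⟩)
    (hmid : ∀ i j : Fin (2 * d), 2 ≤ (i : ℕ) → (i : ℕ) ≤ 2 * d - 2 →
      2 ≤ (j : ℕ) → (j : ℕ) ≤ 2 * d - 2 → μ i = μ j)
    (hgap : 2 * ((d : ℝ) - 2) * μ ⟨2, by lia⟩ + μ ⟨2 * d - 1, by lia⟩ ≤ μ ⟨1, by lia⟩) :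
    Majorizes (Sum.elim htr1.eigenvalues htr2.eigenvalues)
      (Sum.elim (fun s : Fin d => ∑ i : Fin 2, μ (finProdFinEquiv (i, s)))
                (fun j : Fin 2 => ∑ s : Fin d, μ (finProdFinEquiv (j, s)))) ∨
    Majorizes (Sum.elim htr1.eigenvalues htr2.eigenvalues)
      (Sum.elim
        (fun s : Fin d => ∑ i : Fin 2,
          μ (Equiv.swap (⟨1, by lia⟩ : Fin (2 * d)) ⟨d, by lia⟩ (finProdFinEquiv (i, s))))
        (fun j : Fin 2 => ∑ s : Fin d,
          μ (Equiv.swap (⟨1, by lia⟩ : Fin (2 * d)) ⟨d, by lia⟩ (finProdFinEquiv (j, s))))) := by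
  have hmid₂ (i : Fin (2 * d)) (h2 : 2 ≤ (i : ℕ)) (hi : (i : ℕ) ≤ 2 * d - 2) :
      μ i = μ ⟨2, by lia⟩ :=
    hmid i ⟨2, by lia⟩ h2 hi le_rfl (by simp; lia)
  have hΛ := comp_finProdFinEquiv_eq_rowSpiked hd hmid₂
  have hΛ' := comp_swap_finProdFinEquiv_eq_colSpiked hd hmid₂
  obtain ⟨c, hc, hmarginals⟩ := exists_majorizes_eigenvalues_marginals_eq hC htr1 htr2
  have hcΛ : Majorizes c (μ ∘ finProdFinEquiv) := by
    rw [show μ = hC.eigenvalues ∘ g from funext hg]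
    exact hc.comp_equiv (finProdFinEquiv.trans g)
  rw [hΛ] at hcΛ
  rw [← hmarginals]
  change Majorizes _ (marginals (μ ∘ finProdFinEquiv)) ∨
    Majorizes _ (marginals (μ ∘ finProdFinEquiv.trans (Equiv.swap ⟨1, by lia⟩ ⟨d, by lia⟩)))
  rw [hΛ, hΛ']
  have h₀₁ : μ ⟨1, by lia⟩ ≤ μ ⟨0, by lia⟩ := hμ (by simp [Fin.le_def])
  have h₁₂ : μ ⟨2, by lia⟩ ≤ μ ⟨1, by lia⟩ := hμ (by simp [Fin.le_def])
  have h_last : μ ⟨2 * d - 1, by lia⟩ ≤ μ ⟨2, by lia⟩ := hμ (by simp [Fin.le_def]; lia)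
  exact marginals_majorizes_rowSpiked_or_colSpiked hnonneg (by linarith)
    (by linarith) (by linarith) (by rw [Fintype.card_fin]; linarith) (by simp)
    (by simp [Fin.ext_iff]; lia) (by simp [Fin.ext_iff]; lia) hcΛ

theorem sufficient_lambda2_qubit_qudit (d : ℕ) (hd : 2 < d)
    (C : Matrix (Fin 2 × Fin d) (Fin 2 × Fin d) ℂ) (hC : C.PosSemidef)
    (htr1 : (ptrace1 C).IsHermitian) (htr2 : (ptrace2 C).IsHermitian)
    -- `μ` lists the eigenvalues of `C` in decreasing order
    (μ : Fin (2 * d) → ℝ) (hμ : Antitone μ)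
    (g : Fin (2 * d) ≃ Fin 2 × Fin d) (hg : ∀ k, μ k = hC.1.eigenvalues (g k))
    -- `λ_3 = … = λ_{2d-1}` (`μ` is 0-indexed)
    (hmid : ∀ i j : Fin (2 * d), 2 ≤ (i : ℕ) → (i : ℕ) ≤ 2 * d - 2 →
      2 ≤ (j : ℕ) → (j : ℕ) ≤ 2 * d - 2 → μ i = μ j)
    -- `λ_2 ≥ 2(d-2)λ_3 + λ_{2d}`
    (hgap : 2 * ((d : ℝ) - 2) * μ ⟨2, by omega⟩ + μ ⟨2 * d - 1, by omega⟩ ≤ μ ⟨1, by omega⟩) :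
    Majorizes (Sum.elim htr1.eigenvalues htr2.eigenvalues)
      (Sum.elim (fun s : Fin d => ∑ i : Fin 2, μ (finProdFinEquiv (i, s)))
                (fun j : Fin 2 => ∑ s : Fin d, μ (finProdFinEquiv (j, s)))) ∨
    Majorizes (Sum.elim htr1.eigenvalues htr2.eigenvalues)
      (Sum.elim
        (fun s : Fin d => ∑ i : Fin 2,
          μ (Equiv.swap (⟨1, by omega⟩ : Fin (2 * d)) ⟨d, by omega⟩ (finProdFinEquiv (i, s))))
        (fun j : Fin 2 => ∑ s : Fin d,
          μ (Equiv.swap (⟨1, by omega⟩ : Fin (2 * d)) ⟨d, by omega⟩ (finProdFinEquiv (j, s))))) :=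
  sufficient_lambda2_qubit_qudit_general d hd C hC.1 htr1 htr2 μ hμ g hg
    (by rw [hg]; exact hC.eigenvalues_nonneg _) hmid hgap
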